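/- arXiv:2003.11007 — 4 statements merged into one kernel-verified Lean document; each statement's English description precedes it below -/
import Mathlib

section
/- Let A, B, C be complex inner product spaces and let m : A →ₗ[ℂ] B →ₗ[ℂ] C be a bilinear map that factorizes inner products. Then the induced linear map TensorProduct.lift m : A ⊗[ℂ] B →ₗ[ℂ] C is injective. -/
open scoped InnerProductSpace TensorProduct

section

variable {𝕜 A B C : Type*} [RCLike 𝕜]
  [NormedAddCommGroup A] [InnerProductSpace 𝕜 A]
  [NormedAddCommGroup B] [InnerProductSpace 𝕜 B]
  [SeminormedAddCommGroup C] [InnerProductSpace 𝕜 C]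
  {m : A →ₗ[𝕜] B →ₗ[𝕜] C}

/-- A bilinear map factorizes inner products if the inner product of two of its values is the
product of the inner products of the respective arguments. -/
def FactorizesInner (m : A →ₗ[𝕜] B →ₗ[𝕜] C) : Prop :=
  ∀ (a a' : A) (b b' : B), ⟪m a b, m a' b'⟫_𝕜 = ⟪a, a'⟫_𝕜 * ⟪b, b'⟫_𝕜

theorem FactorizesInner.inner_lift_lift (hm : FactorizesInner m) (x y : A ⊗[𝕜] B) :
    ⟪TensorProduct.lift m x, TensorProduct.lift m y⟫_𝕜 = ⟪x, y⟫_𝕜 := by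
  induction x with
  | zero => simp only [map_zero, inner_zero_left]
  | add x₁ x₂ hx₁ hx₂ => simp only [map_add, inner_add_left, hx₁, hx₂]
  | tmul a b =>
    induction y with
    | zero => simp only [map_zero, inner_zero_right]
    | add y₁ y₂ hy₁ hy₂ => simp only [map_add, inner_add_right, hy₁, hy₂]
    | tmul a' b' =>
      simpa only [TensorProduct.lift.tmul, TensorProduct.inner_tmul] using hm a a' b b'

theorem bilinear_factorizing_lift_injective_general (hm : FactorizesInner m) :
    Function.Injective (TensorProduct.lift m) :=
  ((TensorProduct.lift m).isometryOfInner hm.inner_lift_lift).injective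

end

/-- If `m : A →ₗ[ℂ] B →ₗ[ℂ] C` is a bilinear map between complex inner product spaces
that factorizes inner products, then `TensorProduct.lift m` is injective. -/
theorem bilinear_factorizing_lift_injective
    {A B C : Type*}
    [NormedAddCommGroup A] [InnerProductSpace ℂ A]
    [NormedAddCommGroup B] [InnerProductSpace ℂ B]
    [NormedAddCommGroup C] [InnerProductSpace ℂ C]
    (m : A →ₗ[ℂ] B →ₗ[ℂ] C)
    (hm : ∀ (a a' : A) (b b' : B), ⟪m a b, m a' b'⟫_ℂ = ⟪a, a'⟫_ℂ * ⟪b, b'⟫_ℂ) :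
    Function.Injective (TensorProduct.lift m) :=
  bilinear_factorizing_lift_injective_general hm
end

section
/- Let X and Y be complex Hilbert spaces with X separable, and let f : Projectivization ℂ X → Projectivization ℂ Y be a map that preserves transition probabilities. Then there exists a map m : X → Y such that m v ≠ 0 and Projectivization.mk (m v) = f (Projectivization.mk v) for every nonzero v ∈ X, and such that either m is ℂ-linear with ⟪m v, m w⟫ = ⟪v, w⟫ for all v, w ∈ X, or m is conjugate-linear (additive with m (c • v) = (starRingEnd ℂ c) • m v) with ⟪m v, m w⟫ = ⟪w, v⟫ for all v, w ∈ X. -/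
open scoped InnerProductSpace

/-!
Choosing a representative of norm `‖v‖` in the ray of each image turns `f` into a map `T` of vectors
with `|⟪T v, T w⟫| = |⟪v, w⟫|`, whose values may be multiplied freely by phases. Fix a unit vector
`e` and choose the phases so that `⟪T e, T v⟫ = ⟪e, v⟫`. For `x ⊥ e` put `S x = T (e + x) - T e`.
Then `S x ⊥ T e`, so `|1 + ⟪S x, S y⟫| = |1 + ⟪x, y⟫|`; moreover `S x` is a phase multiple of `T x`,
so `|⟪S x, S y⟫| = |⟪x, y⟫|`. A scalar is determined up to conjugation by its modulus and its
distance to `-1`, hence `⟪S x, S y⟫` is `⟪x, y⟫` or its conjugate. In particular `S` preserves real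
parts of inner products and is `ℝ`-linear, and for each `x` either `S (I x) = I S x` or
`S (I x) = -I S x`. The same sign works for all `x`, because a group is not the union of two proper
subgroups. So `S` is a linear or conjugate-linear isometry, and its extension by `e ↦ T e` agrees
with `T` up to phases.
-/

section Wigner

open scoped ComplexConjugate LinearAlgebra.Projectivization
open RCLike

theorem addMonoidHom_eq_or_eq_of_forall_apply {G M : Type*} [AddGroup G] [AddMonoid M]
    {f g h : G →+ M} (H : ∀ x, f x = g x ∨ f x = h x) : f = g ∨ f = h := by
  have hcover : ((⊤ : AddSubgroup G) : Set G) ⊆ (f.eqLocus g : Set G) ∪ f.eqLocus h :=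
    fun x _ => H x
  refine (AddSubgroupClass.subset_union.1 hcover).imp ?_ ?_ <;>
    exact fun hle => AddMonoidHom.ext fun x => hle (AddSubgroup.mem_top x)

variable {𝕜 V X Y : Type*} [RCLike 𝕜]

theorem eq_or_eq_conj_of_norm_eq {z w : 𝕜} (hnorm : ‖z‖ = ‖w‖)
    (hnorm_one_add : ‖1 + z‖ = ‖1 + w‖) : z = w ∨ z = conj w := by
  have norm_one_add_sq (u : 𝕜) : ‖1 + u‖ ^ 2 = 1 + 2 * re u + ‖u‖ ^ 2 := by
    simpa using norm_add_sq (𝕜 := 𝕜) 1 u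
  have hre : re z = re w := by
    have h := norm_one_add_sq z
    rw [hnorm_one_add, norm_one_add_sq, hnorm] at h
    linarith
  have him : im z ^ 2 = im w ^ 2 := by
    have h : ‖z‖ ^ 2 = ‖w‖ ^ 2 := by rw [hnorm]
    rw [norm_sq_eq_def, norm_sq_eq_def, hre] at h
    linarith
  refine (sq_eq_sq_iff_eq_or_eq_neg.1 him).imp (RCLike.ext hre) fun h => ?_
  exact RCLike.ext (by rw [hre, conj_re]) (by rw [h, conj_im])

variable [NormedAddCommGroup V] [InnerProductSpace 𝕜 V] [NormedAddCommGroup X]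
  [InnerProductSpace 𝕜 X] [NormedAddCommGroup Y] [InnerProductSpace 𝕜 Y]

theorem map_real_linear_combination_of_re_inner_map {S : V → Y}
    (hre : ∀ x y, re ⟪S x, S y⟫_𝕜 = re ⟪x, y⟫_𝕜) (a b : ℝ) (x y : V) :
    S ((a : 𝕜) • x + (b : 𝕜) • y) = (a : 𝕜) • S x + (b : 𝕜) • S y := by
  set z := (a : 𝕜) • x + (b : 𝕜) • y with hz
  have hdist : re ⟪S z - ((a : 𝕜) • S x + (b : 𝕜) • S y),
      S z - ((a : 𝕜) • S x + (b : 𝕜) • S y)⟫_𝕜 =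
      re ⟪z - ((a : 𝕜) • x + (b : 𝕜) • y), z - ((a : 𝕜) • x + (b : 𝕜) • y)⟫_𝕜 := by
    simp only [inner_sub_left, inner_sub_right, inner_add_left, inner_add_right,
      inner_smul_real_left, inner_smul_real_right, map_sub, map_add, smul_re, hre]
  rw [← hz, sub_self, inner_zero_left, map_zero] at hdist
  exact sub_eq_zero.1 (re_inner_self_nonpos.1 hdist.le)

theorem map_add_of_re_inner_map {S : V → Y} (hre : ∀ x y, re ⟪S x, S y⟫_𝕜 = re ⟪x, y⟫_𝕜) (x y : V) :
    S (x + y) = S x + S y := by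
  simpa using map_real_linear_combination_of_re_inner_map hre 1 1 x y

theorem norm_map_of_re_inner_map {S : V → Y} (hre : ∀ x y, re ⟪S x, S y⟫_𝕜 = re ⟪x, y⟫_𝕜) (x : V) :
    ‖S x‖ = ‖x‖ := by
  rw [norm_eq_sqrt_re_inner (𝕜 := 𝕜), hre, ← norm_eq_sqrt_re_inner]

/-- A map preserving real parts of inner products is `ℝ`-linear, so its semilinearity only has to be
checked at `I`: the semilinear isometry with underlying function `S`. -/
def semilinearIsometryOfReInner (σ : 𝕜 →+* 𝕜) (hσ : ∀ r : ℝ, σ r = r) (S : V → Y)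
    (hre : ∀ x y, re ⟪S x, S y⟫_𝕜 = re ⟪x, y⟫_𝕜) (hI : ∀ x, S ((I : 𝕜) • x) = σ I • S x) :
    V →ₛₗᵢ[σ] Y where
  toFun := S
  map_add' := map_add_of_re_inner_map hre
  map_smul' c x := calc
    S (c • x) = S ((re c : 𝕜) • x + (im c : 𝕜) • (I : 𝕜) • x) := by
      rw [smul_smul, ← add_smul, re_add_im]
    _ = (re c : 𝕜) • S x + (im c : 𝕜) • σ I • S x := by
      rw [map_real_linear_combination_of_re_inner_map hre, hI]
    _ = σ (re c + im c * I) • S x := by rw [map_add, map_mul, hσ, hσ, add_smul, mul_smul]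
    _ = σ c • S x := by rw [re_add_im]
  norm_map' := norm_map_of_re_inner_map hre

theorem eq_smul_of_inner_eq {u v : Y} {c : 𝕜} (hinner : ⟪u, v⟫_𝕜 = c * ‖u‖ ^ 2)
    (hnorm : ‖v‖ = ‖c‖ * ‖u‖) : v = c • u := by
  have hvu : ⟪v, c • u⟫_𝕜 = c * conj c * ‖u‖ ^ 2 := by
    rw [inner_smul_right, ← inner_conj_symm, hinner]
    simp [mul_assoc]
  have hre : re ⟪v, c • u⟫_𝕜 = ‖c‖ ^ 2 * ‖u‖ ^ 2 := by
    rw [hvu, mul_conj]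
    norm_cast
  rw [← sub_eq_zero, ← norm_eq_zero, ← sq_eq_zero_iff, norm_sub_sq (𝕜 := 𝕜), hre, norm_smul, hnorm]
  ring

theorem re_inner_map_of_inner_map_eq_or_eq_conj {S : V → Y}
    (hS : ∀ x y, ⟪S x, S y⟫_𝕜 = ⟪x, y⟫_𝕜 ∨ ⟪S x, S y⟫_𝕜 = conj ⟪x, y⟫_𝕜) (x y : V) :
    re ⟪S x, S y⟫_𝕜 = re ⟪x, y⟫_𝕜 := by
  rcases hS x y with h | h <;> simp only [h, conj_re]

theorem map_I_smul_eq_or_eq_conj {S : V → Y}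
    (hS : ∀ x y, ⟪S x, S y⟫_𝕜 = ⟪x, y⟫_𝕜 ∨ ⟪S x, S y⟫_𝕜 = conj ⟪x, y⟫_𝕜) (x : V) :
    S ((I : 𝕜) • x) = (I : 𝕜) • S x ∨ S ((I : 𝕜) • x) = conj (I : 𝕜) • S x := by
  have hnorm := norm_map_of_re_inner_map (re_inner_map_of_inner_map_eq_or_eq_conj hS)
  have hxIx : ⟪x, (I : 𝕜) • x⟫_𝕜 = I * ‖S x‖ ^ 2 := by
    rw [inner_smul_right, inner_self_eq_norm_sq_to_K, hnorm]
  refine (hS x ((I : 𝕜) • x)).imp (fun h => ?_) fun h => ?_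
  · exact eq_smul_of_inner_eq (by rw [h, hxIx]) (by rw [hnorm, norm_smul, hnorm])
  · exact eq_smul_of_inner_eq (by rw [h, hxIx]; simp) (by rw [hnorm, norm_smul, hnorm, norm_conj])

theorem exists_semilinearIsometry_coe_eq {S : V → Y}
    (hS : ∀ x y, ⟪S x, S y⟫_𝕜 = ⟪x, y⟫_𝕜 ∨ ⟪S x, S y⟫_𝕜 = conj ⟪x, y⟫_𝕜) :
    ∃ σ : 𝕜 →+* 𝕜, (σ = RingHom.id 𝕜 ∨ σ = starRingEnd 𝕜) ∧ ∃ L : V →ₛₗᵢ[σ] Y, ⇑L = S := by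
  have hre := re_inner_map_of_inner_map_eq_or_eq_conj hS
  let A : V →+ Y := AddMonoidHom.mk' S (map_add_of_re_inner_map hre)
  have hI : A.comp (DistribSMul.toAddMonoidHom V (I : 𝕜)) =
        (DistribSMul.toAddMonoidHom Y (I : 𝕜)).comp A ∨
      A.comp (DistribSMul.toAddMonoidHom V (I : 𝕜)) =
        (DistribSMul.toAddMonoidHom Y (conj (I : 𝕜))).comp A :=
    addMonoidHom_eq_or_eq_of_forall_apply (map_I_smul_eq_or_eq_conj hS)
  rcases hI with hI | hI
  · exact ⟨RingHom.id 𝕜, .inl rfl,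
      semilinearIsometryOfReInner _ (fun _ => rfl) S hre (DFunLike.congr_fun hI), rfl⟩
  · exact ⟨starRingEnd 𝕜, .inr rfl,
      semilinearIsometryOfReInner _ conj_ofReal S hre (DFunLike.congr_fun hI), rfl⟩

theorem inner_map_map_of_conjLinearIsometry (m : X →ₛₗᵢ[starRingEnd 𝕜] Y) (v w : X) :
    ⟪m v, m w⟫_𝕜 = ⟪w, v⟫_𝕜 := by
  have hI : (I : 𝕜) • m w = -m ((I : 𝕜) • w) := by
    rw [m.map_smulₛₗ, conj_I, neg_smul, neg_neg]
  rw [← inner_conj_symm w v, inner_eq_sum_norm_sq_div_four, inner_eq_sum_norm_sq_div_four v w, hI,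
    sub_neg_eq_add, ← sub_eq_add_neg]
  simp only [← map_add, ← map_sub, m.norm_map]
  simp only [map_div₀, map_add, map_sub, map_pow, conj_ofReal, map_mul, conj_I, map_ofNat]
  ring

variable (𝕜) in
/-- Two vectors represent the same pure state with the same norm: they differ by a scalar phase. -/
def PhaseEquiv (u v : X) : Prop :=
  ∃ k : 𝕜, ‖k‖ = 1 ∧ v = k • u

namespace PhaseEquiv

theorem of_norm_inner_eq {u v : X} (hnorm : ‖u‖ = ‖v‖) (hinner : ‖⟪u, v⟫_𝕜‖ = ‖u‖ * ‖v‖) :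
    PhaseEquiv 𝕜 u v := by
  rcases eq_or_ne u 0 with rfl | hu
  · exact ⟨1, norm_one, by simpa [eq_comm] using hnorm⟩
  · have hprop : u = 0 ∨ ∃ k : 𝕜, v = k • u :=
      ((norm_inner_eq_norm_tfae 𝕜 u v).out 0 2).1 hinner
    obtain ⟨k, rfl⟩ := hprop.resolve_left hu
    rw [norm_smul] at hnorm
    exact ⟨k, (mul_eq_right₀ (norm_ne_zero_iff.2 hu)).1 hnorm.symm, rfl⟩

theorem trans {u v w : X} : PhaseEquiv 𝕜 u v → PhaseEquiv 𝕜 v w → PhaseEquiv 𝕜 u w := by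
  rintro ⟨k, hk, rfl⟩ ⟨l, hl, rfl⟩
  exact ⟨l * k, by rw [norm_mul, hk, hl, one_mul], smul_smul l k u⟩

theorem norm_inner {u u' v v' : X} (hu : PhaseEquiv 𝕜 u u') (hv : PhaseEquiv 𝕜 v v') :
    ‖⟪u', v'⟫_𝕜‖ = ‖⟪u, v⟫_𝕜‖ := by
  obtain ⟨k, hk, rfl⟩ := hu
  obtain ⟨l, hl, rfl⟩ := hv
  rw [inner_smul_left, inner_smul_right, norm_mul, norm_mul, norm_conj, hk, hl, one_mul, one_mul]

theorem refl (u : X) : PhaseEquiv 𝕜 u u :=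
  ⟨1, norm_one, (one_smul 𝕜 u).symm⟩

end PhaseEquiv

variable (𝕜) in
/-- The hypothesis of Wigner's theorem for maps of vectors: `T` preserves the moduli of inner
products, hence also norms. -/
def PreservesNormInner (T : X → Y) : Prop :=
  ∀ v w, ‖⟪T v, T w⟫_𝕜‖ = ‖⟪v, w⟫_𝕜‖

theorem PreservesNormInner.norm_map {T : X → Y} (hT : PreservesNormInner 𝕜 T) (v : X) :
    ‖T v‖ = ‖v‖ := by
  have h := hT v v
  simp only [inner_self_eq_norm_sq_to_K, norm_pow, norm_ofReal, abs_norm] at h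
  exact (sq_eq_sq₀ (norm_nonneg _) (norm_nonneg _)).1 h

variable (𝕜) in
/-- A Wigner map `T` whose phases are fixed relative to the unit vector `e`, so that inner products
with `e` are preserved exactly and not merely in modulus. -/
structure NormalizedAt (T : X → Y) (e : X) : Prop where
  preservesNormInner : PreservesNormInner 𝕜 T
  norm_eq_one : ‖e‖ = 1
  inner_map_base (v : X) : ⟪T e, T v⟫_𝕜 = ⟪e, v⟫_𝕜

theorem PreservesNormInner.exists_normalizedAt {T : X → Y} (hT : PreservesNormInner 𝕜 T) {e : X}
    (he : ‖e‖ = 1) : ∃ T' : X → Y, NormalizedAt 𝕜 T' e ∧ ∀ v, PhaseEquiv 𝕜 (T v) (T' v) := by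
  have hphase (v : X) : PhaseEquiv 𝕜 ⟪T e, T v⟫_𝕜 ⟪e, v⟫_𝕜 :=
    .of_norm_inner_eq (hT e v) (by rw [inner_apply, norm_mul, norm_conj, mul_comm])
  choose k hk hinner using hphase
  have hke : k e = 1 := by
    simpa [inner_self_eq_norm_sq_to_K, hT.norm_map, he] using (hinner e).symm
  have hequiv (v : X) : PhaseEquiv 𝕜 (T v) (k v • T v) := ⟨k v, hk v, rfl⟩
  refine ⟨fun v => k v • T v, ⟨fun v w => ?_, he, fun v => ?_⟩, hequiv⟩
  · rw [(hequiv v).norm_inner (hequiv w), hT]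
  · rw [hke, one_smul, inner_smul_right, ← smul_eq_mul, ← hinner]

/-- The map induced by `T` on the directions of the affine hyperplane `e + eᗮ`, with `T e` as the
origin of the image. -/
def displacement (T : X → Y) (e : X) (x : (𝕜 ∙ e)ᗮ) : Y :=
  T (e + x) - T e

theorem inner_coe_orthogonal_singleton (e : X) (x : (𝕜 ∙ e)ᗮ) : ⟪e, (x : X)⟫_𝕜 = 0 :=
  Submodule.mem_orthogonal_singleton_iff_inner_right.1 x.2

theorem inner_add_add_of_inner_eq_zero {u a b : X} (hu : ‖u‖ = 1) (ha : ⟪u, a⟫_𝕜 = 0)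
    (hb : ⟪u, b⟫_𝕜 = 0) : ⟪u + a, u + b⟫_𝕜 = 1 + ⟪a, b⟫_𝕜 := by
  simp [inner_add_left, inner_add_right, inner_self_eq_norm_sq_to_K, hu, hb,
    inner_eq_zero_symm.1 ha]

namespace NormalizedAt

variable {T : X → Y} {e : X}

theorem norm_map_base (h : NormalizedAt 𝕜 T e) : ‖T e‖ = 1 := by
  rw [h.preservesNormInner.norm_map, h.norm_eq_one]

theorem inner_displacement (h : NormalizedAt 𝕜 T e) (x : (𝕜 ∙ e)ᗮ) :
    ⟪T e, displacement T e x⟫_𝕜 = 0 := by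
  rw [displacement, inner_sub_right, h.inner_map_base, h.inner_map_base, inner_add_right,
    add_sub_cancel_left, inner_coe_orthogonal_singleton]

theorem norm_one_add_inner_displacement (h : NormalizedAt 𝕜 T e) (x y : (𝕜 ∙ e)ᗮ) :
    ‖1 + ⟪displacement T e x, displacement T e y⟫_𝕜‖ = ‖1 + ⟪x, y⟫_𝕜‖ := by
  have hT (x : (𝕜 ∙ e)ᗮ) : T e + displacement T e x = T (e + x) := add_sub_cancel _ _
  calc ‖1 + ⟪displacement T e x, displacement T e y⟫_𝕜‖ = ‖⟪T (e + x), T (e + y)⟫_𝕜‖ := by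
        rw [← hT, ← hT, inner_add_add_of_inner_eq_zero h.norm_map_base (h.inner_displacement x)
          (h.inner_displacement y)]
    _ = ‖⟪e + (x : X), e + (y : X)⟫_𝕜‖ := h.preservesNormInner _ _
    _ = ‖1 + ⟪x, y⟫_𝕜‖ := by
        rw [inner_add_add_of_inner_eq_zero h.norm_eq_one (inner_coe_orthogonal_singleton e x)
          (inner_coe_orthogonal_singleton e y), Submodule.coe_inner]

theorem norm_displacement (h : NormalizedAt 𝕜 T e) (x : (𝕜 ∙ e)ᗮ) : ‖displacement T e x‖ = ‖x‖ := by
  have hY := norm_add_sq_eq_norm_sq_add_norm_sq_of_inner_eq_zero (𝕜 := 𝕜) _ _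
    (h.inner_displacement x)
  have hX := norm_add_sq_eq_norm_sq_add_norm_sq_of_inner_eq_zero (𝕜 := 𝕜) _ _
    (inner_coe_orthogonal_singleton e x)
  rw [displacement, add_sub_cancel, ← displacement, h.preservesNormInner.norm_map, h.norm_map_base,
    hX, h.norm_eq_one, add_right_inj] at hY
  exact ((mul_self_inj (norm_nonneg _) (norm_nonneg _)).1 hY).symm

theorem norm_inner_map_displacement (h : NormalizedAt 𝕜 T e) (x y : (𝕜 ∙ e)ᗮ) :
    ‖⟪T x, displacement T e y⟫_𝕜‖ = ‖⟪x, y⟫_𝕜‖ := by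
  have hxe : ⟪(x : X), e⟫_𝕜 = 0 := inner_eq_zero_symm.1 (inner_coe_orthogonal_singleton e x)
  have hTxe : ⟪T x, T e⟫_𝕜 = 0 := by
    rw [← norm_eq_zero, h.preservesNormInner, hxe, norm_zero]
  rw [displacement, inner_sub_right, hTxe, sub_zero, h.preservesNormInner, inner_add_right, hxe,
    zero_add, Submodule.coe_inner]

theorem phaseEquiv_displacement (h : NormalizedAt 𝕜 T e) (x : (𝕜 ∙ e)ᗮ) :
    PhaseEquiv 𝕜 (T x) (displacement T e x) := by
  refine .of_norm_inner_eq ?_ ?_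
  · rw [h.preservesNormInner.norm_map, h.norm_displacement, Submodule.coe_norm]
  · rw [h.norm_inner_map_displacement, h.preservesNormInner.norm_map, h.norm_displacement,
      inner_self_eq_norm_sq_to_K]
    simp [sq]

theorem inner_displacement_eq_or_eq_conj (h : NormalizedAt 𝕜 T e) (x y : (𝕜 ∙ e)ᗮ) :
    ⟪displacement T e x, displacement T e y⟫_𝕜 = ⟪x, y⟫_𝕜 ∨
      ⟪displacement T e x, displacement T e y⟫_𝕜 = conj ⟪x, y⟫_𝕜 := by
  refine eq_or_eq_conj_of_norm_eq ?_ (h.norm_one_add_inner_displacement x y)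
  rw [(h.phaseEquiv_displacement x).norm_inner (.refl _), h.norm_inner_map_displacement]

theorem phaseEquiv_map {σ : 𝕜 →+* 𝕜} [RingHomIsometric σ] (h : NormalizedAt 𝕜 T e)
    {m : X →ₛₗᵢ[σ] Y} (hm : ∀ x : (𝕜 ∙ e)ᗮ, m (e + x) = T (e + x)) (v : X) :
    PhaseEquiv 𝕜 (T v) (m v) := by
  have hme : m e = T e := by simpa using hm 0
  obtain ⟨y, hy, x, hx, rfl⟩ := (𝕜 ∙ e).exists_add_mem_mem_orthogonal v
  obtain ⟨c, rfl⟩ := Submodule.mem_span_singleton.1 hy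
  lift x to (𝕜 ∙ e)ᗮ using hx
  rcases eq_or_ne c 0 with rfl | hc
  · have hmx : m x = displacement T e x := by
      rw [displacement, ← hm, map_add, hme, add_sub_cancel_left]
    simpa only [zero_smul, zero_add, hmx] using h.phaseEquiv_displacement x
  · set u : X := e + (c⁻¹ • x : (𝕜 ∙ e)ᗮ) with hu
    have hcu : c • e + (x : X) = c • u := by
      rw [hu, Submodule.coe_smul, smul_add, smul_inv_smul₀ hc]
    rw [hcu]
    refine .of_norm_inner_eq ?_ ?_
    · rw [h.preservesNormInner.norm_map, m.norm_map]
    · calc ‖⟪T (c • u), m (c • u)⟫_𝕜‖ = ‖c‖ * ‖⟪T (c • u), T u⟫_𝕜‖ := by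
            rw [m.map_smulₛₗ, hm, inner_smul_right, norm_mul, RingHomIsometric.norm_map]
        _ = ‖⟪c • u, c • u⟫_𝕜‖ := by
            rw [h.preservesNormInner, inner_smul_right _ _ c, norm_mul]
        _ = ‖T (c • u)‖ * ‖m (c • u)‖ := by
            rw [h.preservesNormInner.norm_map, m.norm_map, inner_self_eq_norm_sq_to_K]
            simp [sq]

end NormalizedAt

/-- The semilinear isometry that extends `S` from `eᗮ` to the whole space by sending the unit vector
`e` to a unit vector `u` orthogonal to the range of `S`. -/
noncomputable def extendOrthogonal {σ : 𝕜 →+* 𝕜} [RingHomIsometric σ] {e : X} (he : ‖e‖ = 1)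
    {u : Y} (hu : ‖u‖ = 1) (S : (𝕜 ∙ e)ᗮ →ₛₗᵢ[σ] Y) (hS : ∀ x, ⟪u, S x⟫_𝕜 = 0) :
    X →ₛₗᵢ[σ] Y where
  toFun v := σ ⟪e, v⟫_𝕜 • u + S ((𝕜 ∙ e)ᗮ.orthogonalProjectionOnto v)
  map_add' v w := by
    simp only [inner_add_right, map_add, add_smul]
    abel
  map_smul' c v := by
    simp only [inner_smul_right, map_mul, mul_smul, map_smul, map_smulₛₗ, smul_add]
  norm_map' v := by
    have horth : ⟪σ ⟪e, v⟫_𝕜 • u, S ((𝕜 ∙ e)ᗮ.orthogonalProjectionOnto v)⟫_𝕜 = 0 := by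
      rw [inner_smul_left, hS, mul_zero]
    rw [← sq_eq_sq₀ (norm_nonneg _) (norm_nonneg _)]
    calc ‖σ ⟪e, v⟫_𝕜 • u + S ((𝕜 ∙ e)ᗮ.orthogonalProjectionOnto v)‖ ^ 2
        = ‖⟪e, v⟫_𝕜‖ ^ 2 + ‖(𝕜 ∙ e)ᗮ.orthogonalProjectionOnto v‖ ^ 2 := by
          rw [norm_add_sq (𝕜 := 𝕜), horth, map_zero, mul_zero, add_zero, norm_smul, hu, mul_one,
            RingHomIsometric.norm_map, S.norm_map]
      _ = ‖(𝕜 ∙ e).starProjection v‖ ^ 2 + ‖(𝕜 ∙ e)ᗮ.starProjection v‖ ^ 2 := by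
          rw [Submodule.starProjection_unit_singleton 𝕜 he, norm_smul, he, mul_one,
            ← Submodule.coe_orthogonalProjectionOnto_apply, Submodule.coe_norm]
      _ = ‖v‖ ^ 2 := (Submodule.norm_sq_eq_add_norm_sq_starProjection v (𝕜 ∙ e)).symm

theorem extendOrthogonal_add {σ : 𝕜 →+* 𝕜} [RingHomIsometric σ] {e : X} (he : ‖e‖ = 1)
    {u : Y} (hu : ‖u‖ = 1) (S : (𝕜 ∙ e)ᗮ →ₛₗᵢ[σ] Y) (hS : ∀ x, ⟪u, S x⟫_𝕜 = 0) (x : (𝕜 ∙ e)ᗮ) :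
    extendOrthogonal he hu S hS (e + x) = u + S x := by
  change σ ⟪e, e + (x : X)⟫_𝕜 • u + S ((𝕜 ∙ e)ᗮ.orthogonalProjectionOnto (e + x)) = u + S x
  simp [inner_add_right, inner_coe_orthogonal_singleton, inner_self_eq_norm_sq_to_K, he,
    Submodule.orthogonalProjectionOnto_orthogonalComplement_singleton_eq_zero]

theorem PreservesNormInner.exists_semilinearIsometry_phaseEquiv {T : X → Y}
    (hT : PreservesNormInner 𝕜 T) :
    ∃ σ : 𝕜 →+* 𝕜, (σ = RingHom.id 𝕜 ∨ σ = starRingEnd 𝕜) ∧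
      ∃ m : X →ₛₗᵢ[σ] Y, ∀ v, PhaseEquiv 𝕜 (T v) (m v) := by
  rcases subsingleton_or_nontrivial X with hX | hX
  · refine ⟨RingHom.id 𝕜, .inl rfl, ⟨0, fun v => by simp [Subsingleton.elim v 0]⟩, fun v => ?_⟩
    have hTv : T v = 0 := by rw [← norm_eq_zero, hT.norm_map, Subsingleton.elim v 0, norm_zero]
    rw [hTv]
    exact .refl (0 : Y)
  obtain ⟨x, hx⟩ := exists_ne (0 : X)
  obtain ⟨e, he⟩ : ∃ e : X, ‖e‖ = 1 := ⟨_, norm_smul_inv_norm (𝕜 := 𝕜) hx⟩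
  obtain ⟨T', hT', hequiv⟩ := hT.exists_normalizedAt he
  obtain ⟨σ, hσ, S, hS⟩ := exists_semilinearIsometry_coe_eq hT'.inner_displacement_eq_or_eq_conj
  have : RingHomIsometric σ := by rcases hσ with rfl | rfl <;> infer_instance
  let m := extendOrthogonal he hT'.norm_map_base S fun x => by rw [hS, hT'.inner_displacement]
  refine ⟨σ, hσ, m, fun v => (hequiv v).trans (hT'.phaseEquiv_map (fun x => ?_) v)⟩
  rw [extendOrthogonal_add, hS, displacement, add_sub_cancel]

/-- The transition probability of two rays, computed on the representatives `Projectivization.rep`;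
by `transitionProb_mk` any other representatives give the same value. -/
noncomputable def transitionProb (p q : ℙ 𝕜 X) : ℝ :=
  ‖⟪p.rep, q.rep⟫_𝕜‖ ^ 2 / (‖p.rep‖ ^ 2 * ‖q.rep‖ ^ 2)

theorem transitionProb_mk (v w : X) (hv : v ≠ 0) (hw : w ≠ 0) :
    transitionProb (.mk 𝕜 v hv) (.mk 𝕜 w hw) = ‖⟪v, w⟫_𝕜‖ ^ 2 / (‖v‖ ^ 2 * ‖w‖ ^ 2) := by
  obtain ⟨a, ha⟩ := Projectivization.exists_smul_eq_mk_rep 𝕜 v hv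
  obtain ⟨b, hb⟩ := Projectivization.exists_smul_eq_mk_rep 𝕜 w hw
  have ha0 : ‖(a : 𝕜)‖ ≠ 0 := norm_ne_zero_iff.2 a.ne_zero
  have hb0 : ‖(b : 𝕜)‖ ≠ 0 := norm_ne_zero_iff.2 b.ne_zero
  rw [transitionProb, ← ha, ← hb, Units.smul_def, Units.smul_def, inner_smul_left,
    inner_smul_right, norm_mul, norm_mul, norm_conj, norm_smul, norm_smul]
  field_simp

theorem exists_norm_eq_and_mk_eq (p : ℙ 𝕜 X) {r : ℝ} (hr : 0 < r) :
    ∃ (u : X) (hu : u ≠ 0), ‖u‖ = r ∧ Projectivization.mk 𝕜 u hu = p := by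
  have hp := norm_ne_zero_iff.2 p.rep_nonzero
  have hnorm : ‖((r / ‖p.rep‖ : ℝ) : 𝕜) • p.rep‖ = r := by
    rw [norm_smul, norm_of_nonneg (by positivity), div_mul_cancel₀ _ hp]
  have hu : ((r / ‖p.rep‖ : ℝ) : 𝕜) • p.rep ≠ 0 := by
    rw [← norm_ne_zero_iff, hnorm]
    exact hr.ne'
  refine ⟨_, hu, hnorm, ?_⟩
  conv_rhs => rw [← p.mk_rep]
  exact (Projectivization.mk_eq_mk_iff' 𝕜 _ _ hu p.rep_nonzero).2 ⟨_, rfl⟩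

theorem exists_preservesNormInner_lift {f : ℙ 𝕜 X → ℙ 𝕜 Y}
    (hf : ∀ p q, transitionProb (f p) (f q) = transitionProb p q) :
    ∃ T : X → Y, PreservesNormInner 𝕜 T ∧
      ∀ v (hv : v ≠ 0), ∃ hTv : T v ≠ 0, Projectivization.mk 𝕜 (T v) hTv = f (.mk 𝕜 v hv) := by
  have hlift (v : X) : ∃ u : Y, ‖u‖ = ‖v‖ ∧
      ∀ hv : v ≠ 0, ∃ hu : u ≠ 0, Projectivization.mk 𝕜 u hu = f (.mk 𝕜 v hv) := by
    rcases eq_or_ne v 0 with rfl | hv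
    · exact ⟨0, by simp, fun h => absurd rfl h⟩
    · obtain ⟨u, hu, hnorm, hmk⟩ := exists_norm_eq_and_mk_eq (f (.mk 𝕜 v hv)) (norm_pos_iff.2 hv)
      exact ⟨u, hnorm, fun _ => ⟨hu, hmk⟩⟩
  choose T hnorm hmk using hlift
  have hzero : T 0 = 0 := by rw [← norm_eq_zero, hnorm, norm_zero]
  refine ⟨T, fun v w => ?_, hmk⟩
  rcases eq_or_ne v 0 with rfl | hv
  · rw [hzero, inner_zero_left, inner_zero_left]
  rcases eq_or_ne w 0 with rfl | hw
  · rw [hzero, inner_zero_right, inner_zero_right]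
  obtain ⟨hTv, hmkv⟩ := hmk v hv
  obtain ⟨hTw, hmkw⟩ := hmk w hw
  have h := hf (.mk 𝕜 v hv) (.mk 𝕜 w hw)
  rw [← hmkv, ← hmkw, transitionProb_mk, transitionProb_mk, hnorm, hnorm] at h
  have hden : ‖v‖ ^ 2 * ‖w‖ ^ 2 ≠ 0 := by simp [hv, hw]
  exact (sq_eq_sq₀ (norm_nonneg _) (norm_nonneg _)).1 ((div_left_inj' hden).1 h)

theorem exists_semilinearIsometry_map_eq {f : ℙ 𝕜 X → ℙ 𝕜 Y}
    (hf : ∀ p q, transitionProb (f p) (f q) = transitionProb p q) :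
    ∃ σ : 𝕜 →+* 𝕜, (σ = RingHom.id 𝕜 ∨ σ = starRingEnd 𝕜) ∧
      ∃ m : X →ₛₗᵢ[σ] Y, Projectivization.map m.toLinearMap m.injective = f := by
  obtain ⟨T, hT, hTf⟩ := exists_preservesNormInner_lift hf
  obtain ⟨σ, hσ, m, hm⟩ := hT.exists_semilinearIsometry_phaseEquiv
  refine ⟨σ, hσ, m, funext fun p => ?_⟩
  induction p with | h v hv =>
  obtain ⟨hTv, hmk⟩ := hTf v hv
  obtain ⟨k, -, hk⟩ := hm v
  rw [Projectivization.map_mk, ← hmk]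
  exact (Projectivization.mk_eq_mk_iff' 𝕜 _ _ _ hTv).2 ⟨k, hk.symm⟩

theorem projectivization_transition_preserving_lift_general
    (f : ℙ 𝕜 X → ℙ 𝕜 Y)
    (hf : ∀ (v w : X) (hv : v ≠ 0) (hw : w ≠ 0),
      ‖⟪(f (.mk 𝕜 v hv)).rep, (f (.mk 𝕜 w hw)).rep⟫_𝕜‖ ^ 2 /
          (‖(f (.mk 𝕜 v hv)).rep‖ ^ 2 * ‖(f (.mk 𝕜 w hw)).rep‖ ^ 2)
        = ‖⟪v, w⟫_𝕜‖ ^ 2 / (‖v‖ ^ 2 * ‖w‖ ^ 2)) :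
    ∃ m : X → Y,
      (∀ (v : X) (hv : v ≠ 0), ∃ hmv : m v ≠ 0,
        Projectivization.mk 𝕜 (m v) hmv = f (.mk 𝕜 v hv)) ∧
      (((∀ x y : X, m (x + y) = m x + m y) ∧
          (∀ (c : 𝕜) (x : X), m (c • x) = c • m x) ∧
          (∀ v w : X, ⟪m v, m w⟫_𝕜 = ⟪v, w⟫_𝕜)) ∨
        ((∀ x y : X, m (x + y) = m x + m y) ∧
          (∀ (c : 𝕜) (x : X), m (c • x) = conj c • m x) ∧
          (∀ v w : X, ⟪m v, m w⟫_𝕜 = ⟪w, v⟫_𝕜))) := by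
  have hf' (p q : ℙ 𝕜 X) : transitionProb (f p) (f q) = transitionProb p q := by
    induction p with | h v hv =>
    induction q with | h w hw => exact (hf v w hv hw).trans (transitionProb_mk v w hv hw).symm
  obtain ⟨σ, hσ, m, rfl⟩ := exists_semilinearIsometry_map_eq hf'
  refine ⟨m, fun v hv => ⟨(map_ne_zero_iff m m.injective).2 hv, rfl⟩, ?_⟩
  rcases hσ with rfl | rfl
  · exact .inl ⟨map_add m, map_smul m, m.inner_map_map⟩
  · exact .inr ⟨map_add m, m.map_smulₛₗ, inner_map_map_of_conjLinearIsometry m⟩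

end Wigner

/-- Wigner-type theorem / fundamental theorem of projective geometry: a map between the
projectivizations of complex Hilbert spaces (the domain separable) preserving transition
probabilities lifts to a map on vectors that is either linear and inner-product
preserving, or conjugate-linear and inner-product conjugating. -/
theorem projectivization_transition_preserving_lift
    {X Y : Type*}
    [NormedAddCommGroup X] [InnerProductSpace ℂ X] [CompleteSpace X]
    [TopologicalSpace.SeparableSpace X]
    [NormedAddCommGroup Y] [InnerProductSpace ℂ Y] [CompleteSpace Y]
    (f : Projectivization ℂ X → Projectivization ℂ Y)
    (hf : ∀ (v w : X) (hv : v ≠ 0) (hw : w ≠ 0),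
      ‖⟪(f (Projectivization.mk ℂ v hv)).rep, (f (Projectivization.mk ℂ w hw)).rep⟫_ℂ‖ ^ 2 /
          (‖(f (Projectivization.mk ℂ v hv)).rep‖ ^ 2 *
            ‖(f (Projectivization.mk ℂ w hw)).rep‖ ^ 2)
        = ‖⟪v, w⟫_ℂ‖ ^ 2 / (‖v‖ ^ 2 * ‖w‖ ^ 2)) :
    ∃ m : X → Y,
      (∀ (v : X) (hv : v ≠ 0), ∃ hmv : m v ≠ 0,
        Projectivization.mk ℂ (m v) hmv = f (Projectivization.mk ℂ v hv)) ∧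
      (((∀ x y : X, m (x + y) = m x + m y) ∧
          (∀ (c : ℂ) (x : X), m (c • x) = c • m x) ∧
          (∀ v w : X, ⟪m v, m w⟫_ℂ = ⟪v, w⟫_ℂ)) ∨
        ((∀ x y : X, m (x + y) = m x + m y) ∧
          (∀ (c : ℂ) (x : X), m (c • x) = (starRingEnd ℂ) c • m x) ∧
          (∀ v w : X, ⟪m v, m w⟫_ℂ = ⟪w, v⟫_ℂ))) :=
  projectivization_transition_preserving_lift_general f hf
end

section
/- Let E be a complex inner product space and let a, b ∈ E be nonzero vectors such that for every nonzero c ∈ E the transition probabilities agree: ‖⟪a,c⟫‖^2 / (‖a‖^2 * ‖c‖^2) = ‖⟪b,c⟫‖^2 / (‖b‖^2 * ‖c‖^2). Then a and b lie on the same ray: there exists a nonzero λ ∈ ℂ with b = λ • a, i.e. Projectivization.mk a = Projectivization.mk b. -/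
open scoped InnerProductSpace

/-!
Take `c = b` in the hypothesis: the transition probability between `a` and `b` is `1`, which is the
equality case of the Cauchy–Schwarz inequality.
-/

section TransitionProbability

variable {𝕜 E : Type*} [RCLike 𝕜] [NormedAddCommGroup E] [InnerProductSpace 𝕜 E]

variable (𝕜) in
/-- The transition probability between the rays spanned by `v` and `w`, expressed through
representatives; it is `0` if `v` or `w` vanishes. -/
noncomputable def transitionProbability (v w : E) : ℝ :=
  ‖⟪v, w⟫_𝕜‖ ^ 2 / (‖v‖ ^ 2 * ‖w‖ ^ 2)

theorem transitionProbability_eq_one_iff {v w : E} (hv : v ≠ 0) (hw : w ≠ 0) :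
    transitionProbability 𝕜 v w = 1 ↔ ∃ l : 𝕜, l ≠ 0 ∧ w = l • v := by
  have norm_mul_ne_zero : ‖v‖ * ‖w‖ ≠ 0 :=
    mul_ne_zero (norm_ne_zero_iff.2 hv) (norm_ne_zero_iff.2 hw)
  calc
    transitionProbability 𝕜 v w = 1 ↔ ‖⟪v, w⟫_𝕜‖ ^ 2 = (‖v‖ * ‖w‖) ^ 2 := by
      rw [transitionProbability, ← mul_pow, div_eq_one_iff_eq (pow_ne_zero 2 norm_mul_ne_zero)]
    _ ↔ ‖⟪v, w⟫_𝕜‖ = ‖v‖ * ‖w‖ := sq_eq_sq₀ (norm_nonneg _) (by positivity)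
    _ ↔ ∃ l : 𝕜, l ≠ 0 ∧ w = l • v := norm_inner_eq_norm_iff hv hw

theorem transitionProbability_self {v : E} (hv : v ≠ 0) : transitionProbability 𝕜 v v = 1 :=
  (transitionProbability_eq_one_iff hv hv).2 ⟨1, one_ne_zero, (one_smul 𝕜 v).symm⟩

theorem transitionProbability_eq_one_iff_mk_eq_mk {v w : E} (hv : v ≠ 0) (hw : w ≠ 0) :
    transitionProbability 𝕜 v w = 1 ↔ Projectivization.mk 𝕜 v hv = Projectivization.mk 𝕜 w hw := by
  rw [transitionProbability_eq_one_iff hv hw, eq_comm, Projectivization.mk_eq_mk_iff]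
  exact ⟨fun ⟨l, hl, hwv⟩ => ⟨Units.mk0 l hl, hwv.symm⟩, fun ⟨u, huv⟩ => ⟨u, u.ne_zero, huv.symm⟩⟩

theorem same_transition_probabilities_same_ray_general {a b : E} (ha : a ≠ 0) (hb : b ≠ 0)
    (h : transitionProbability 𝕜 a b = transitionProbability 𝕜 b b) :
    (∃ l : 𝕜, l ≠ 0 ∧ b = l • a) ∧
      Projectivization.mk 𝕜 a ha = Projectivization.mk 𝕜 b hb := by
  have h_one : transitionProbability 𝕜 a b = 1 := h.trans (transitionProbability_self hb)
  exact ⟨(transitionProbability_eq_one_iff ha hb).1 h_one,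
    (transitionProbability_eq_one_iff_mk_eq_mk ha hb).1 h_one⟩

end TransitionProbability

/-- Two nonzero vectors in a complex inner product space having the same transition
probabilities against every nonzero vector lie on the same ray. -/
theorem same_transition_probabilities_same_ray
    {E : Type*} [NormedAddCommGroup E] [InnerProductSpace ℂ E]
    (a b : E) (ha : a ≠ 0) (hb : b ≠ 0)
    (h : ∀ c : E, c ≠ 0 →
      ‖⟪a, c⟫_ℂ‖ ^ 2 / (‖a‖ ^ 2 * ‖c‖ ^ 2) = ‖⟪b, c⟫_ℂ‖ ^ 2 / (‖b‖ ^ 2 * ‖c‖ ^ 2)) :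
    (∃ l : ℂ, l ≠ 0 ∧ b = l • a) ∧
      Projectivization.mk ℂ a ha = Projectivization.mk ℂ b hb :=
  same_transition_probabilities_same_ray_general ha hb (h b hb)
end

section
/- Let E be a finite-dimensional complex inner product space, let ψ ∈ E with ‖ψ‖ = 1, and let Pψ : E →ₗ[ℂ] E be the rank-one projection Pψ x = ⟪ψ, x⟫ • ψ. Let ι be a finite index type, p : ι → ℝ with pᵢ ≥ 0 and ∑ᵢ pᵢ = 1, and ρ : ι → (E →ₗ[ℂ] E) a family of density operators, i.e. each ρᵢ is self-adjoint, positive semidefinite (0 ≤ re ⟪x, ρᵢ x⟫ for all x), and has trace 1. If ∑ᵢ pᵢ • ρᵢ = Pψ, then ρᵢ = Pψ for every i with pᵢ ≠ 0; in other words, a pure state is an extreme point of the convex set of density operators. -/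
open scoped InnerProductSpace

/-!
Each weighted component `p i • ρ i` lies below the mixture in the Loewner order. An operator
`0 ≤ T ≤ S` vanishes on the kernel of `S`, by Cauchy–Schwarz for the semi-inner product
`⟪x, T y⟫`. So if `S` is the projection onto the line spanned by `ψ`, then `T` vanishes on `ψᗮ`;
being symmetric, it is then a multiple of `S`, and taking traces identifies the multiple.
-/

section

open InnerProductSpace Submodule

variable {𝕜 E : Type*} [RCLike 𝕜] [NormedAddCommGroup E] [InnerProductSpace 𝕜 E]
  {S T : E →ₗ[𝕜] E} {ψ : E}

theorem norm_inner_apply_sq_le_of_isPositive (hT : T.IsPositive) (x y : E) :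
    ‖⟪x, T y⟫_𝕜‖ ^ 2 ≤ RCLike.re ⟪x, T x⟫_𝕜 * RCLike.re ⟪y, T y⟫_𝕜 := by
  have conj_symm (u v : E) : starRingEnd 𝕜 ⟪v, T u⟫_𝕜 = ⟪u, T v⟫_𝕜 := by
    rw [inner_conj_symm, hT.isSymmetric u v]
  let form : PreInnerProductSpace.Core 𝕜 E :=
    { inner u v := ⟪u, T v⟫_𝕜
      conj_inner_symm := conj_symm
      re_inner_nonneg := hT.re_inner_nonneg_right
      add_left := fun _ _ _ => inner_add_left ..
      smul_left := fun _ _ _ => inner_smul_left .. }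
  have norm_symm : ‖⟪y, T x⟫_𝕜‖ = ‖⟪x, T y⟫_𝕜‖ := by rw [← conj_symm, RCLike.norm_conj]
  calc ‖⟪x, T y⟫_𝕜‖ ^ 2 = ‖⟪x, T y⟫_𝕜‖ * ‖⟪y, T x⟫_𝕜‖ := by rw [norm_symm, sq]
    _ ≤ _ := InnerProductSpace.Core.inner_mul_inner_self_le (c := form) x y

theorem apply_eq_zero_of_isPositive_of_re_inner_eq_zero (hT : T.IsPositive) {x : E}
    (hx : RCLike.re ⟪x, T x⟫_𝕜 = 0) : T x = 0 := by
  have hle := norm_inner_apply_sq_le_of_isPositive hT (T x) x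
  rw [hx, mul_zero] at hle
  have hzero : ⟪T x, T x⟫_𝕜 = 0 := by
    simpa using le_antisymm hle (sq_nonneg _)
  exact inner_self_eq_zero.mp hzero

theorem ker_le_ker_of_nonneg_of_le (hT : 0 ≤ T) (hTS : T ≤ S) : S.ker ≤ T.ker := by
  intro x hx
  have hT' : T.IsPositive := T.nonneg_iff_isPositive.mp hT
  have hle : RCLike.re ⟪x, T x⟫_𝕜 ≤ 0 := by
    simpa [LinearMap.mem_ker.mp hx] using ((T.le_def S).mp hTS).re_inner_nonneg_right x
  exact apply_eq_zero_of_isPositive_of_re_inner_eq_zero hT'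
    (hle.antisymm (hT'.re_inner_nonneg_right x))

theorem exists_eq_smul_rankOne_of_orthogonal_le_ker (hT : T.IsSymmetric)
    (hker : (𝕜 ∙ ψ)ᗮ ≤ T.ker) : ∃ c : 𝕜, T = c • (rankOne 𝕜 ψ ψ).toLinearMap := by
  have hrange : T.range ≤ 𝕜 ∙ ψ :=
    calc T.range ≤ T.rangeᗮᗮ := le_orthogonal_orthogonal _
      _ ≤ (𝕜 ∙ ψ)ᗮᗮ := orthogonal_le (hT.orthogonal_range ▸ hker)
      _ = 𝕜 ∙ ψ := orthogonal_orthogonal _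
  obtain ⟨a, ha⟩ := mem_span_singleton.mp (hrange ⟨ψ, rfl⟩)
  refine ⟨a / (‖ψ‖ ^ 2 : ℝ), LinearMap.ext fun x => ?_⟩
  have hproj : T x = T ((𝕜 ∙ ψ).starProjection x) :=
    LinearMap.sub_mem_ker_iff.mp (hker (sub_starProjection_mem_orthogonal x))
  rw [hproj, starProjection_singleton, map_smul, ← ha, LinearMap.smul_apply,
    ContinuousLinearMap.coe_coe, rankOne_apply, smul_smul, smul_smul]
  ring_nf

theorem eq_trace_smul_rankOne_of_nonneg_of_le [FiniteDimensional 𝕜 E] (hψ : ‖ψ‖ = 1)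
    (hT : 0 ≤ T) (hle : T ≤ (rankOne 𝕜 ψ ψ).toLinearMap) :
    T = T.trace 𝕜 E • (rankOne 𝕜 ψ ψ).toLinearMap := by
  have hker : (𝕜 ∙ ψ)ᗮ ≤ T.ker := fun x hx =>
    ker_le_ker_of_nonneg_of_le hT hle
      (by simp [mem_orthogonal_singleton_iff_inner_right.mp hx])
  obtain ⟨c, rfl⟩ := exists_eq_smul_rankOne_of_orthogonal_le_ker
    (T.nonneg_iff_isPositive.mp hT).isSymmetric hker
  simp [trace_rankOne, inner_self_eq_norm_sq_to_K, hψ]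

theorem pure_state_extreme_point_general [FiniteDimensional 𝕜 E] (hψ : ‖ψ‖ = 1)
    {ι : Type*} [Fintype ι] {p : ι → ℝ} (hp : ∀ i, 0 ≤ p i)
    {ρ : ι → (E →ₗ[𝕜] E)} (hρ : ∀ i, (ρ i).IsPositive)
    (hmix : ∑ i, (p i : 𝕜) • ρ i = (rankOne 𝕜 ψ ψ).toLinearMap)
    {i : ι} (htr : (ρ i).trace 𝕜 E = 1) (hi : p i ≠ 0) :
    ρ i = (rankOne 𝕜 ψ ψ).toLinearMap := by
  have hnonneg (j : ι) : 0 ≤ (p j : 𝕜) • ρ j :=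
    (LinearMap.nonneg_iff_isPositive _).mpr
      ((hρ j).smul_of_nonneg (RCLike.ofReal_nonneg.mpr (hp j)))
  have hle : (p i : 𝕜) • ρ i ≤ (rankOne 𝕜 ψ ψ).toLinearMap :=
    hmix ▸ Finset.single_le_sum (fun j _ => hnonneg j) (Finset.mem_univ i)
  have hscaled : (p i : 𝕜) • ρ i = (p i : 𝕜) • (rankOne 𝕜 ψ ψ).toLinearMap := by
    simpa only [map_smul, htr, smul_eq_mul, mul_one] using
      eq_trace_smul_rankOne_of_nonneg_of_le hψ (hnonneg i) hle
  exact smul_right_injective _ (RCLike.ofReal_ne_zero.mpr hi) hscaled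

end

/-- A pure state is an extreme point of the set of density operators: if a convex
mixture of density operators equals the rank-one projection onto a unit vector `ψ`,
then every component with nonzero weight equals that projection. -/
theorem pure_state_extreme_point
    {E : Type*} [NormedAddCommGroup E] [InnerProductSpace ℂ E] [FiniteDimensional ℂ E]
    (ψ : E) (hψ : ‖ψ‖ = 1)
    (Pψ : E →ₗ[ℂ] E) (hP : ∀ x : E, Pψ x = ⟪ψ, x⟫_ℂ • ψ)
    {ι : Type*} [Fintype ι]
    (p : ι → ℝ) (hp0 : ∀ i, 0 ≤ p i) (hp1 : ∑ i, p i = 1)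
    (ρ : ι → (E →ₗ[ℂ] E))
    (hsa : ∀ i, LinearMap.IsSymmetric (ρ i))
    (hpos : ∀ (i : ι) (x : E), 0 ≤ (⟪x, ρ i x⟫_ℂ).re)
    (htr : ∀ i, LinearMap.trace ℂ E (ρ i) = 1)
    (hmix : ∑ i, p i • ρ i = Pψ) :
    ∀ i, p i ≠ 0 → ρ i = Pψ := by
  obtain rfl : Pψ = (InnerProductSpace.rankOne ℂ ψ ψ).toLinearMap := LinearMap.ext hP
  have hρ (i : ι) : (ρ i).IsPositive := ⟨hsa i, fun x => (hsa i x x).symm ▸ hpos i x⟩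
  exact fun i hi => pure_state_extreme_point_general hψ hp0 hρ hmix (htr i) hi
end
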